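/- For all integers k, ℓ ≥ 0 and all α, β ∈ ℤ, the tau-functions satisfy equation (4) of the generalized Q-system (a T-system relation): τ_{k−1,ℓ}^{(α,β+1)} τ_{k,ℓ+1}^{(α,β)} = τ_{k−1,ℓ}^{(α,β)} τ_{k,ℓ+1}^{(α,β+1)} + τ_{k−1,ℓ+1}^{(α,β)} τ_{k,ℓ}^{(α,β+1)}. -/

import Mathlib

/-- The `ĜL₃` tau-function (with `E(z) = 0`): for `k ≥ ℓ ≥ 0`, `(−1)^{ℓ(ℓ+1)/2}` times the
determinant of the `k × k` matrix whose `(i,j)` entry is `d_{α+i+j}` for `0 ≤ j ≤ ℓ-1` and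
`c_{α−β+i+j−ℓ}` for `ℓ ≤ j ≤ k-1`; it is set to `0` whenever `k < ℓ`, `ℓ < 0`, or `k < 0`. -/
noncomputable def tau3Z (c d : ℤ → ℂ) (k ℓ α β : ℤ) : ℂ :=
  if k < ℓ ∨ ℓ < 0 ∨ k < 0 then 0
  else
    (-1 : ℂ) ^ (ℓ.toNat * (ℓ.toNat + 1) / 2) *
      Matrix.det (Matrix.of fun i j : Fin k.toNat =>
        if ((j : ℕ) : ℤ) < ℓ then d (α + (i : ℕ) + (j : ℕ))
        else c (α - β + (i : ℕ) + (j : ℕ) - ℓ))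

open Matrix in
/-- The determinant of truncations to length `N` of infinite vectors, as an alternating map. -/
noncomputable def Fdet (N : ℕ) : (ℕ → ℂ) [⋀^Fin N]→ₗ[ℂ] ℂ :=
  (Matrix.detRowAlternating (n := Fin N) (R := ℂ)).compLinearMap
    (LinearMap.funLeft ℂ ℂ (fun i : Fin N => (i : ℕ)))

lemma Fdet_apply (N : ℕ) (v : Fin N → ℕ → ℂ) :
    Fdet N v = Matrix.det (Matrix.of fun i j : Fin N => v i j) := rfl

lemma Fdet_cramer (N : ℕ) (v : Fin N → ℕ → ℂ) (z : ℕ → ℂ) (L : (Fin N → ℂ) →ₗ[ℂ] ℂ) :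
    Fdet N v * L (fun i => z i) =
      ∑ i, Fdet N (Function.update v i z) * L (fun j => v i j) := by
  set A : Matrix (Fin N) (Fin N) ℂ := Matrix.of fun i j : Fin N => v i j with hA
  have h := Matrix.mulVec_cramer A.transpose (fun i : Fin N => z i)
  have h2 := congrArg L h
  rw [Matrix.det_transpose, map_smul, smul_eq_mul] at h2
  rw [Fdet_apply, ← h2]
  have h3 : A.transpose.mulVec (A.transpose.cramer (fun i : Fin N => z i)) =
      ∑ i, (A.transpose.cramer (fun i : Fin N => z i)) i • A i := by
    ext j
    simp [Matrix.mulVec, dotProduct, mul_comm]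
  rw [h3, map_sum]
  refine Finset.sum_congr rfl fun i _ => ?_
  rw [map_smul, smul_eq_mul, Matrix.cramer_transpose_apply, Fdet_apply]
  congr 2
  ext a b
  by_cases hab : a = i
  · subst hab; simp
  · simp [hab, hA]

/-- `Fdet` with two distinguished leading vectors. -/
noncomputable def Bdet (n : ℕ) (S : Fin n → ℕ → ℂ) (x y : ℕ → ℂ) : ℂ :=
  Fdet (n + 2) (Matrix.vecCons x (Matrix.vecCons y S))

lemma Bdet_swap (n : ℕ) (S : Fin n → ℕ → ℂ) (x y : ℕ → ℂ) : Bdet n S y x = - Bdet n S x y := by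
  unfold Bdet
  rw [← AlternatingMap.map_swap _ _ (i := 0) (j := 1) (by simp)]
  congr 1
  funext j
  refine Fin.cases ?_ (fun j => ?_) j
  · simp
  · refine Fin.cases ?_ (fun j => ?_) j
    · simp
    · have : Equiv.swap (0 : Fin (n + 2)) 1 j.succ.succ = j.succ.succ := by
        apply Equiv.swap_apply_of_ne_of_ne
        · exact Fin.succ_ne_zero _
        · intro h
          have := congrArg Fin.val h
          simp at this
      simp only [Function.comp, this, Matrix.cons_val_succ]

lemma Bdet_plucker (n : ℕ) (S : Fin n → ℕ → ℂ) (x y z e : ℕ → ℂ) :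
    Bdet n S x y * Bdet n S e z = Bdet n S z y * Bdet n S e x + Bdet n S x z * Bdet n S e y := by
  let M : Matrix (Fin (n + 2)) (Fin (n + 2)) ℂ :=
    Matrix.of fun i j => (Matrix.vecCons e (Matrix.vecCons 0 S)) i j
  let L : (Fin (n + 2) → ℂ) →ₗ[ℂ] ℂ :=
    (Matrix.detRowAlternating (n := Fin (n + 2)) (R := ℂ)).toMultilinearMap.toLinearMap M 1
  have hL : ∀ w : ℕ → ℂ, L (fun j => w j) = Bdet n S e w := by
    intro w
    change Matrix.det (M.updateRow 1 (fun j => w j)) = _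
    unfold Bdet
    rw [Fdet_apply]
    congr 1
    ext i j
    refine Fin.cases ?_ (fun i => ?_) i
    · rw [Matrix.updateRow_ne (by simp)]; simp [M]
    · refine Fin.cases ?_ (fun i => ?_) i
      · rw [Fin.succ_zero_eq_one, Matrix.updateRow_self]; simp
      · rw [Matrix.updateRow_ne]
        · simp [M]
        · intro h
          have := congrArg Fin.val h
          simp at this
  have h := Fdet_cramer (n + 2) (Matrix.vecCons x (Matrix.vecCons y S)) z L
  simp only [hL] at h
  rw [Fin.sum_univ_succ, Fin.sum_univ_succ] at h
  have h0 : ∀ i, Bdet n S e (S i) = 0 := by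
    intro i
    refine AlternatingMap.map_eq_zero_of_eq _ _ (i := 1) (j := i.succ.succ) ?_ ?_
    · simp
    · intro h
      have := congrArg Fin.val h
      simp at this
  have e1 : Function.update (Matrix.vecCons x (Matrix.vecCons y S)) 0 z
      = Matrix.vecCons z (Matrix.vecCons y S) := by
    simp [Matrix.vecCons]
  have e2 : Function.update (Matrix.vecCons x (Matrix.vecCons y S)) (Fin.succ 0) z
      = Matrix.vecCons x (Matrix.vecCons z S) := by
    rw [Matrix.vecCons, ← Fin.cons_update]
    simp [Matrix.vecCons]
  rw [e1, e2] at h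
  simp only [Matrix.cons_val_succ, Matrix.cons_val_zero, h0, mul_zero, Finset.sum_const_zero,
    add_zero] at h
  exact h

lemma Fdet_last (n : ℕ) (w : Fin n → ℕ → ℂ) :
    Fdet (n + 1) ((Fin.last n).insertNth (Pi.single n 1) w) = Fdet n w := by
  rw [Fdet_apply, Matrix.det_succ_row _ (Fin.last n), Finset.sum_eq_single (Fin.last n)]
  · rw [Fdet_apply]
    have : ((-1 : ℂ)) ^ ((Fin.last n : ℕ) + (Fin.last n : ℕ)) = 1 := by
      rw [← two_mul, pow_mul]; simp
    rw [this]
    simp only [Matrix.of_apply, Fin.insertNth_apply_same, Fin.val_last, Pi.single_eq_same, one_mul]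
    congr 1
    ext i j
    simp only [Matrix.submatrix_apply, Matrix.of_apply, Fin.insertNth_apply_succAbove]
    simp
  · intro b _ hb
    have : (b : ℕ) ≠ n := fun h => hb (Fin.ext h)
    simp [this]
  · simp

lemma Fdet_insert (n : ℕ) (p : Fin (n + 1)) (x : ℕ → ℂ) (S : Fin n → ℕ → ℂ) :
    Fdet (n + 1) (p.insertNth x S) = (-1) ^ (p : ℕ) * Fdet (n + 1) (Matrix.vecCons x S) := by
  rw [AlternatingMap.map_insertNth]; simp

lemma Fdet_insert2 (n : ℕ) (p : Fin (n + 2)) (q : Fin (n + 1)) (x y : ℕ → ℂ)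
    (S : Fin n → ℕ → ℂ) :
    Fdet (n + 2) (p.insertNth x (q.insertNth y S : Fin (n + 1) → ℕ → ℂ)) =
      (-1) ^ (p : ℕ) * ((-1) ^ (q : ℕ) * Bdet n S x y) := by
  rw [Fdet_insert]
  congr 1
  have := ((Fdet (n + 2)).curryLeft x).map_insertNth q y S
  simp only [AlternatingMap.curryLeft_apply_apply] at this
  rw [this]; simp [Bdet]

lemma Bdet_e (n : ℕ) (S : Fin n → ℕ → ℂ) (x : ℕ → ℂ) :
    Bdet n S (Pi.single (n + 1) 1) x = (-1) ^ (n + 1) * Fdet (n + 1) (Matrix.vecCons x S) := by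
  have h := Fdet_last (n + 1) (Matrix.vecCons x S)
  rw [Fdet_insert] at h
  rw [← h, ← mul_assoc, ← pow_add, Fin.val_last, ← two_mul, pow_mul]
  simp [Bdet]

lemma plucker_G (n : ℕ) (S : Fin n → ℕ → ℂ) (x y z : ℕ → ℂ) :
    Fdet (n + 1) (Matrix.vecCons y S) * Bdet n S x z =
      Fdet (n + 1) (Matrix.vecCons z S) * Bdet n S x y +
      Fdet (n + 1) (Matrix.vecCons x S) * Bdet n S y z := by
  have h := Bdet_plucker n S x y z (Pi.single (n + 1) 1)
  simp only [Bdet_e] at h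
  have hne : ((-1 : ℂ)) ^ (n + 1) ≠ 0 := by simp
  apply mul_left_cancel₀ hne
  rw [Bdet_swap n S y z] at h
  linear_combination -h

lemma tau_eq (c d : ℤ → ℂ) (K L : ℕ) (hL : L ≤ K) (k ℓ α β : ℤ) (hk : k = K) (hl : ℓ = L) :
    tau3Z c d k ℓ α β = (-1) ^ (L * (L + 1) / 2) *
      Fdet K (fun j i => if (j : ℕ) < L then d (α + i + (j : ℕ))
        else c (α - β + i + (j : ℕ) - L)) := by
  subst hk hl
  unfold tau3Z
  rw [if_neg (by omega), Fdet_apply, ← Matrix.det_transpose]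
  congr 1
  simp only [Nat.cast_lt]
  rfl

lemma succAbove_val {n : ℕ} (p : Fin (n + 1)) (j : Fin n) :
    ((p.succAbove j : Fin (n + 1)) : ℕ) = if (j : ℕ) < p then (j : ℕ) else j + 1 := by
  unfold Fin.succAbove
  simp only [Fin.lt_def, Fin.val_castSucc]
  split_ifs <;> simp

theorem gl3_Qsystem_eq4 (c d : ℤ → ℂ) (k ℓ : ℤ) (hk : 0 ≤ k) (hℓ : 0 ≤ ℓ) (α β : ℤ) :
    tau3Z c d (k - 1) ℓ α (β + 1) * tau3Z c d k (ℓ + 1) α β =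
      tau3Z c d (k - 1) ℓ α β * tau3Z c d k (ℓ + 1) α (β + 1) +
        tau3Z c d (k - 1) (ℓ + 1) α β * tau3Z c d k ℓ α (β + 1) := by
  have hz : ∀ a b β : ℤ, a < b → tau3Z c d a b α β = 0 := by
    intro a b β h
    unfold tau3Z
    rw [if_pos (Or.inl h)]
  rcases lt_trichotomy (k - 1) ℓ with h | h | h
  · rw [hz _ _ _ h, hz _ _ _ h, hz (k - 1) (ℓ + 1) _ (by omega)]; simp
  · rw [hz (k - 1) (ℓ + 1) _ (by omega)]
    obtain ⟨L, rfl⟩ := Int.eq_ofNat_of_zero_le hℓ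
    rw [tau_eq c d L L le_rfl (k - 1) L α β h rfl, tau_eq c d L L le_rfl (k - 1) L α (β + 1) h rfl,
      tau_eq c d (L + 1) (L + 1) le_rfl k (L + 1) α β (by push_cast; omega) (by simp),
      tau_eq c d (L + 1) (L + 1) le_rfl k (L + 1) α (β + 1) (by push_cast; omega) (by simp)]
    simp only [Fin.is_lt, if_true, zero_mul, add_zero]
  · obtain ⟨L, rfl⟩ := Int.eq_ofNat_of_zero_le hℓ
    obtain ⟨n, hn⟩ := Int.eq_ofNat_of_zero_le (show 0 ≤ k - 2 by omega)
    have hLn : L ≤ n := by omega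
    let S : Fin n → ℕ → ℂ := fun j i => if (j : ℕ) < L then d (α + i + (j : ℕ))
        else c (α - β + i + (j : ℕ) - L)
    let x : ℕ → ℂ := fun i => d (α + i + L)
    let y : ℕ → ℂ := fun i => c (α - (β + 1) + i)
    let z : ℕ → ℂ := fun i => c (α - β + i + n - L)
    let p : Fin (n + 1) := ⟨L, by omega⟩
    let p' : Fin (n + 2) := ⟨L, by omega⟩
    rw [tau_eq c d (n + 1) L (by omega) (k - 1) L α (β + 1) (by push_cast; omega) rfl,
      tau_eq c d (n + 1) L (by omega) (k - 1) L α β (by push_cast; omega) rfl,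
      tau_eq c d (n + 1) (L + 1) (by omega) (k - 1) (L + 1) α β (by push_cast; omega) (by simp),
      tau_eq c d (n + 2) (L + 1) (by omega) k (L + 1) α β (by push_cast; omega) (by simp),
      tau_eq c d (n + 2) (L + 1) (by omega) k (L + 1) α (β + 1) (by push_cast; omega) (by simp),
      tau_eq c d (n + 2) L (by omega) k L α (β + 1) (by push_cast; omega) rfl]
    have U1 : (fun (j : Fin (n + 1)) (i : ℕ) => if (j : ℕ) < L then d (α + i + (j : ℕ))
        else c (α - (β + 1) + i + (j : ℕ) - L)) = p.insertNth y S := by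
      rw [Fin.eq_insertNth_iff]
      refine ⟨?_, ?_⟩
      · funext i; simp [p, y]
      · funext j i
        simp only [Fin.removeNth, succAbove_val, S, p]
        split_ifs <;> first | omega | rfl | (congr 1; done) | (congr 1; push_cast; ring)
    have U2 : (fun (j : Fin (n + 1)) (i : ℕ) => if (j : ℕ) < L then d (α + i + (j : ℕ))
        else c (α - β + i + (j : ℕ) - L)) = (Fin.last n).insertNth z S := by
      rw [Fin.eq_insertNth_iff]
      refine ⟨?_, ?_⟩
      · funext i; simp [z]; intro; omega
      · funext j i
        simp [Fin.removeNth, S]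
    have U3 : (fun (j : Fin (n + 1)) (i : ℕ) => if (j : ℕ) < L + 1 then d (α + i + (j : ℕ))
        else c (α - β + i + (j : ℕ) - ((L + 1 : ℕ) : ℤ))) = p.insertNth x S := by
      rw [Fin.eq_insertNth_iff]
      refine ⟨?_, ?_⟩
      · funext i; simp [p, x]
      · funext j i
        simp only [Fin.removeNth, succAbove_val, S, p]
        split_ifs <;> first | omega | rfl | (congr 1; done) | (congr 1; push_cast; ring)
    have T1 : (fun (j : Fin (n + 2)) (i : ℕ) => if (j : ℕ) < L + 1 then d (α + i + (j : ℕ))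
        else c (α - β + i + (j : ℕ) - ((L + 1 : ℕ) : ℤ))) =
        p'.insertNth x ((Fin.last n).insertNth z S : Fin (n + 1) → ℕ → ℂ) := by
      rw [← U2, Fin.eq_insertNth_iff]
      refine ⟨?_, ?_⟩
      · funext i; simp [p', x]
      · funext j i
        simp only [Fin.removeNth, succAbove_val, p']
        split_ifs <;> first | omega | rfl | (congr 1; done) | (congr 1; push_cast; ring)
    have T2 : (fun (j : Fin (n + 2)) (i : ℕ) => if (j : ℕ) < L + 1 then d (α + i + (j : ℕ))
        else c (α - (β + 1) + i + (j : ℕ) - ((L + 1 : ℕ) : ℤ))) =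
        p'.insertNth x (p.insertNth y S : Fin (n + 1) → ℕ → ℂ) := by
      rw [← U1, Fin.eq_insertNth_iff]
      refine ⟨?_, ?_⟩
      · funext i; simp [p', x]
      · funext j i
        simp only [Fin.removeNth, succAbove_val, p']
        split_ifs <;> first | omega | rfl | (congr 1; done) | (congr 1; push_cast; ring)
    have T3 : (fun (j : Fin (n + 2)) (i : ℕ) => if (j : ℕ) < L then d (α + i + (j : ℕ))
        else c (α - (β + 1) + i + (j : ℕ) - L)) =
        p'.insertNth y ((Fin.last n).insertNth z S : Fin (n + 1) → ℕ → ℂ) := by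
      rw [← U2, Fin.eq_insertNth_iff]
      refine ⟨?_, ?_⟩
      · funext i; simp [p', y]
      · funext j i
        simp only [Fin.removeNth, succAbove_val, p']
        split_ifs <;> first | omega | rfl | (congr 1; done) | (congr 1; push_cast; ring)
    rw [U1, U2, U3, T1, T2, T3]
    simp only [Fdet_insert2]
    simp only [Fdet_insert]
    have hG := plucker_G n S x y z
    simp only [p, p', Fin.val_last]
    linear_combination (-1) ^ (L * (L + 1) / 2) * (-1) ^ ((L + 1) * (L + 1 + 1) / 2) *
      ((-1) ^ L * (-1) ^ L * (-1) ^ n) * hG
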